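/- Let G be a finite group acting faithfully and transitively on a finite set Z, let α ∈ Z, and let B_α = {β ∈ Z : σ(β) = β for all σ ∈ G_α}. Let G_{B_α} be the setwise stabilizer of B_α in G, acting on B_α. If Λ ⊆ B_α is a minimal block of this action of G_{B_α} on B_α, then Λ is a minimal block of G on Z. -/

import Mathlib

/-!
The set `B_α` consists of the points whose stabilizer contains `G_α`. All point stabilizers
are conjugate, so they have the same finite order, and hence `G_β = G_α` for every `β ∈ B_α`.
If `σ` sends some `β ∈ B_α` into `B_α`, then `σ G_α σ⁻¹ = σ G_β σ⁻¹ = G_{σβ} = G_α`, so `σ`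
normalizes `G_α` and preserves `B_α`; that is, `B_α` is itself a block of `G`.

Consequently, any `σ ∈ G` for which `σ(Λ)` meets `Λ` lies in `G_{B_α}`, so `Λ` is a block of `G`.
Conversely, every block of `G` inside `Λ` is a block of `G_{B_α}`, so minimality transfers.
-/

open Pointwise

/-- `B` is a block of the action of `G` on `Z`: for every `σ ∈ G`, the set `σ(B) ∩ B`
is empty or equals `B`. -/
def IsBlockOfAction (G : Type*) [Group G] {Z : Type*} [MulAction G Z] (B : Set Z) : Prop :=
  ∀ σ : G, σ • B ∩ B = ∅ ∨ σ • B ∩ B = B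

/-- The trivial blocks (for an action on all of `Z`) are `∅`, `Z` and the singletons. -/
def IsTrivialBlock' {Z : Type*} (B : Set Z) : Prop :=
  B = ∅ ∨ B = Set.univ ∨ ∃ γ : Z, B = {γ}

/-- In a finite transitive action, an inclusion of point stabilizers is an equality, since
they all have the same order. -/
theorem stabilizer_eq_of_le {G Z : Type*} [Group G] [Finite G] [MulAction G Z]
    [MulAction.IsPretransitive G Z] {α β : Z}
    (h : MulAction.stabilizer G α ≤ MulAction.stabilizer G β) :
    MulAction.stabilizer G α = MulAction.stabilizer G β := by
  obtain ⟨g, hg⟩ := MulAction.exists_smul_eq G α β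
  exact Subgroup.eq_of_le_of_card_ge h
    (Nat.card_congr (MulAction.stabilizerEquivStabilizer hg.symm).toEquiv).ge

/-- The fixed-point set of `G_α` is preserved by every `σ` that sends one of its points back
into it. -/
theorem smul_fixedSet_eq {G Z : Type*} [Group G] [Finite G] [MulAction G Z]
    [MulAction.IsPretransitive G Z] {α β : Z} {σ : G}
    (hβ : MulAction.stabilizer G α ≤ MulAction.stabilizer G β)
    (hσβ : MulAction.stabilizer G α ≤ MulAction.stabilizer G (σ • β)) :
    σ • {γ : Z | ∀ τ ∈ MulAction.stabilizer G α, τ • γ = γ} =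
      {γ : Z | ∀ τ ∈ MulAction.stabilizer G α, τ • γ = γ} := by
  have hαβ := stabilizer_eq_of_le hβ
  have hασβ := stabilizer_eq_of_le hσβ
  -- `σ` normalizes `G_α`
  have hnorm : ∀ τ : G, τ ∈ MulAction.stabilizer G α ↔
      σ⁻¹ * τ * σ ∈ MulAction.stabilizer G α := by
    intro τ
    conv_lhs => rw [hασβ]
    conv_rhs => rw [hαβ]
    simp only [MulAction.mem_stabilizer_iff, mul_smul, inv_smul_eq_iff]
  ext γ
  rw [Set.mem_smul_set_iff_inv_smul_mem]
  constructor
  · intro h τ hτ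
    have := h _ ((hnorm τ).1 hτ)
    simpa only [mul_smul, smul_inv_smul, smul_left_cancel_iff] using this
  · intro h τ hτ
    have hconj : σ * τ * σ⁻¹ ∈ MulAction.stabilizer G α :=
      (hnorm _).2 (by simpa [mul_assoc] using hτ)
    rw [eq_inv_smul_iff]
    simpa only [mul_smul] using h _ hconj

/-- **Lemma.** Let `G` act faithfully and transitively on a finite set `Z`, let `α ∈ Z`
and `B_α = {β : σ(β) = β for all σ ∈ G_α}`.  If `Λ ⊆ B_α` is a minimal block of the
induced action of the setwise stabilizer `G_{B_α}` on `B_α` (membership of `σ` in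
`G_{B_α}` being expressed by `σ • B_α = B_α`, and the trivial blocks of that action
being `∅`, the singletons and `B_α` itself), then `Λ` is a minimal block of `G` on
`Z`. -/
theorem minimal_block_of_stabilizer_action_is_minimal
    {G Z : Type*} [Group G] [Finite G] [MulAction G Z] [Finite Z]
    [FaithfulSMul G Z] [MulAction.IsPretransitive G Z] (α : Z)
    (Bα : Set Z) (hBα : Bα = {β : Z | ∀ σ ∈ MulAction.stabilizer G α, σ • β = β})
    (Λ : Set Z) (hΛBα : Λ ⊆ Bα)
    -- `Λ` is a block of the action of `G_{B_α}` on `B_α`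
    (hblock : ∀ σ : G, σ • Bα = Bα → (σ • Λ ∩ Λ = ∅ ∨ σ • Λ ∩ Λ = Λ))
    -- `Λ` is a nontrivial block of this action
    (hne : Λ ≠ ∅) (hnesingle : ∀ γ : Z, Λ ≠ {γ}) (hneBα : Λ ≠ Bα)
    -- `Λ` is minimal: every block of the action of `G_{B_α}` on `B_α` contained in `Λ`
    -- is trivial or equal to `Λ`
    (hmin : ∀ Λ' ⊆ Λ,
      (∀ σ : G, σ • Bα = Bα → (σ • Λ' ∩ Λ' = ∅ ∨ σ • Λ' ∩ Λ' = Λ')) →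
      (Λ' = ∅ ∨ (∃ γ : Z, Λ' = {γ}) ∨ Λ' = Bα ∨ Λ' = Λ)) :
    IsBlockOfAction G Λ ∧ ¬ IsTrivialBlock' Λ ∧
      ∀ B ⊆ Λ, IsBlockOfAction G B → (IsTrivialBlock' B ∨ B = Λ) := by
  refine ⟨fun σ => ?_, ?_, fun B hB hBblock => ?_⟩
  · rcases Set.eq_empty_or_nonempty (σ • Λ ∩ Λ) with h | ⟨γ, hγ, hγΛ⟩
    · exact Or.inl h
    · obtain ⟨β, hβ, rfl⟩ := hγ
      have h1 := hΛBα hβ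
      have h2 := hΛBα hγΛ
      subst hBα
      exact hblock σ (smul_fixedSet_eq h1 h2)
  · rintro (h | h | ⟨γ, h⟩)
    · exact hne h
    · exact hneBα (hΛBα.antisymm (h ▸ Set.subset_univ Bα))
    · exact hnesingle γ h
  · rcases hmin B hB fun σ _ => hBblock σ with h | h | h | h
    · exact Or.inl (Or.inl h)
    · exact Or.inl (Or.inr (Or.inr h))
    · exact Or.inr (hB.antisymm (h ▸ hΛBα))
    · exact Or.inr h
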